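/- arXiv:1701.01481 — 3 statements merged into one kernel-verified Lean document; each statement's English description precedes it below -/
import Mathlib

section
/- Let τ : ℝⁿ × [0,∞) → ℝ be bounded, compactly supported, and Lipschitz continuous with respect to the Euclidean distance, and let ψ : H → ℝ be smooth and compactly supported in H, normalized so that ∫_H ψ(q⁻¹) dV(q) = 1, i.e. ∫_{ℝⁿ×(0,∞)} ψ(−θ/ρ, 1/ρ) ρ^{−(n+1)} dθ dρ = 1. Then there exists a constant C (depending on τ and ψ) such that for all (θ,ρ) ∈ H, |τ(θ,ρ) − (τ*ψ)(θ,ρ)| ≤ Cρ; that is, τ − τ*ψ = O(ρ). -/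
open MeasureTheory

noncomputable section

/-- The open upper half-space `H = ℝⁿ × (0,∞)` inside `ℝⁿ × ℝ`. -/
def Hset (n : ℕ) : Set (EuclideanSpace ℝ (Fin n) × ℝ) := {p | 0 < p.2}

/-- Group multiplication on `H`: `(θ,ρ)·(θ',ρ') = (θ + ρθ', ρρ')`. -/
def hMul' {n : ℕ} (p q : EuclideanSpace ℝ (Fin n) × ℝ) : EuclideanSpace ℝ (Fin n) × ℝ :=
  (p.1 + p.2 • q.1, p.2 * q.2)

/-- Group inverse on `H`: `(θ,ρ)⁻¹ = (−θ/ρ, 1/ρ)`. -/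
def hInv' {n : ℕ} (p : EuclideanSpace ℝ (Fin n) × ℝ) : EuclideanSpace ℝ (Fin n) × ℝ :=
  (-(p.2⁻¹ • p.1), p.2⁻¹)

/-- The hyperbolic volume measure `dV(θ,ρ) = ρ^{−(n+1)} dθ dρ` on `H`. -/
def hypVol (n : ℕ) : Measure (EuclideanSpace ℝ (Fin n) × ℝ) :=
  (volume.restrict (Hset n)).withDensity fun p => ENNReal.ofReal ((p.2 ^ (n + 1))⁻¹)

/-- The group-theoretic convolution `(τ*ψ)(q) = ∫_H τ(p) ψ(p⁻¹·q) dV(p)`. -/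
def hConv {n : ℕ} (τ ψ : EuclideanSpace ℝ (Fin n) × ℝ → ℝ)
    (q : EuclideanSpace ℝ (Fin n) × ℝ) : ℝ :=
  ∫ p, τ p * ψ (hMul' (hInv' p) q) ∂(hypVol n)

lemma hyp_int {n : ℕ} (f : EuclideanSpace ℝ (Fin n) × ℝ → ℝ) :
    ∫ r, f r ∂(hypVol n) = ∫ r, (Hset n).indicator (fun r => (r.2 ^ (n + 1))⁻¹ * f r) r := by
  have hm : MeasurableSet (Hset n) := measurableSet_lt measurable_const measurable_snd
  rw [integral_indicator hm, hypVol, integral_withDensity_eq_integral_toReal_smul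
    (by fun_prop) (by simp)]
  refine setIntegral_congr_fun hm fun r hr => ?_
  have : 0 < r.2 := hr
  simp only [smul_eq_mul]
  rw [ENNReal.toReal_ofReal (by positivity)]

lemma hyp_left_inv {n : ℕ} (f : EuclideanSpace ℝ (Fin n) × ℝ → ℝ)
    (q : EuclideanSpace ℝ (Fin n) × ℝ) (hq : 0 < q.2) :
    ∫ r, f r ∂(hypVol n) = ∫ r, f (hMul' q r) ∂(hypVol n) := by
  rw [hyp_int, hyp_int]
  set g := (Hset n).indicator (fun r => (r.2 ^ (n + 1))⁻¹ * f r) with hg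
  have h1 : ∀ r : EuclideanSpace ℝ (Fin n) × ℝ,
      (Hset n).indicator (fun r => (r.2 ^ (n + 1))⁻¹ * f (hMul' q r)) r
        = q.2 ^ (n + 1) * g ((q.1, 0) + q.2 • r) := by
    intro r
    have e : ((q.1, 0) + q.2 • r : EuclideanSpace ℝ (Fin n) × ℝ) = hMul' q r := by
      ext <;> simp [hMul']
    rw [e]
    by_cases hr : 0 < r.2
    · have h2 : hMul' q r ∈ Hset n := by
        change 0 < q.2 * r.2
        positivity
      rw [hg, Set.indicator_of_mem (show r ∈ Hset n from hr), Set.indicator_of_mem h2]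
      have : (hMul' q r).2 = q.2 * r.2 := rfl
      rw [this, mul_pow]
      field_simp
    · have h2 : hMul' q r ∉ Hset n := by
        change ¬ (0 < q.2 * r.2)
        intro h
        exact hr (pos_of_mul_pos_right h hq.le |> fun h => h)
      rw [hg, Set.indicator_of_notMem (show r ∉ Hset n from hr), Set.indicator_of_notMem h2,
        mul_zero]
  simp_rw [h1]
  have : (volume : Measure (EuclideanSpace ℝ (Fin n) × ℝ)).IsAddHaarMeasure :=
    Measure.prod.instIsAddHaarMeasure (volume : Measure (EuclideanSpace ℝ (Fin n)))
      (volume : Measure ℝ)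
  rw [integral_const_mul,
    Measure.integral_comp_smul volume (fun r => g ((q.1, 0) + r)) q.2,
    integral_add_left_eq_self g]
  have hd : Module.finrank ℝ (EuclideanSpace ℝ (Fin n) × ℝ) = n + 1 := by simp
  rw [hd, abs_of_pos (by positivity), smul_eq_mul, ← mul_assoc,
    mul_inv_cancel₀ (by positivity), one_mul]

/-- If `τ` is bounded, compactly supported, and Lipschitz on `ℝⁿ × [0,∞)`, and `ψ` is smooth,
compactly supported in `H`, and normalized so that `∫_H ψ(q⁻¹) dV(q) = 1`, then
`τ − τ*ψ = O(ρ)`: there is `C` with `|τ(θ,ρ) − (τ*ψ)(θ,ρ)| ≤ Cρ` on `H`. -/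
theorem stmt8 (n : ℕ) (hn : 1 ≤ n)
    (τ : EuclideanSpace ℝ (Fin n) × ℝ → ℝ)
    (K : NNReal) (hτlip : LipschitzOnWith K τ {p | 0 ≤ p.2})
    (hτbdd : ∃ M : ℝ, ∀ p, |τ p| ≤ M) (hτsupp : HasCompactSupport τ)
    (ψ : EuclideanSpace ℝ (Fin n) × ℝ → ℝ)
    (hψ : ContDiff ℝ (⊤ : ℕ∞) ψ) (hψsupp : HasCompactSupport ψ) (hψH : tsupport ψ ⊆ Hset n)
    (hψnorm : ∫ q, ψ (hInv' q) ∂(hypVol n) = 1) :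
    ∃ C : ℝ, ∀ p ∈ Hset n, |τ p - hConv τ ψ p| ≤ C * p.2 := by
  have hm : MeasurableSet (Hset n) := measurableSet_lt measurable_const measurable_snd
  have hac : hypVol n ≪ volume.restrict (Hset n) := withDensity_absolutelyContinuous _ _
  have hae : ∀ᵐ r ∂(hypVol n), r ∈ Hset n := hac.ae_le (ae_restrict_mem hm)
  have hint : Integrable (fun q => ψ (hInv' q)) (hypVol n) := by
    by_contra h
    rw [integral_undef h] at hψnorm
    exact zero_ne_one hψnorm
  obtain ⟨M, hM⟩ := hτbdd
  have hc : ContinuousOn (hInv' (n := n)) (tsupport ψ) := by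
    have h2 : ContinuousOn (fun p : EuclideanSpace ℝ (Fin n) × ℝ => p.2⁻¹) (tsupport ψ) :=
      continuousOn_snd.inv₀ fun p hp => (show 0 < p.2 from hψH hp).ne'
    exact (h2.smul continuousOn_fst).neg.prodMk h2
  obtain ⟨B, hB⟩ := (IsCompact.image_of_continuousOn hψsupp hc).isBounded.exists_norm_le
  have hBr : ∀ r ∈ Hset n, ψ (hInv' r) ≠ 0 → ‖r‖ ≤ B := by
    intro r hr h
    have hr' : r.2 ≠ 0 := (show 0 < r.2 from hr).ne'
    refine hB r ⟨hInv' r, subset_tsupport _ h, ?_⟩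
    ext <;> simp [hInv', hr']
  refine ⟨K * (B + 1) * ∫ r, |ψ (hInv' r)| ∂(hypVol n), fun q hq => ?_⟩
  have hq0 : 0 < q.2 := hq
  have hconv : hConv τ ψ q = ∫ r, τ (hMul' q r) * ψ (hInv' r) ∂(hypVol n) := by
    rw [hConv, hyp_left_inv _ q hq0]
    refine integral_congr_ae ?_
    filter_upwards [hae] with r hr
    have hr' : r.2 ≠ 0 := (show 0 < r.2 from hr).ne'
    have : hMul' (hInv' (hMul' q r)) q = hInv' r := by
      ext i
      · simp [hMul', hInv']
        field_simp
        try ring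
      · simp [hMul', hInv']
        try field_simp
    simp only [this]
  have hmem : ∀ r ∈ Hset n, hMul' q r ∈ Hset n := fun r hr => mul_pos hq0 hr
  have hmem' : ∀ r ∈ Hset n, 0 ≤ (hMul' q r).2 := fun r hr => le_of_lt (hmem r hr)
  have hmeas : AEStronglyMeasurable (fun r => τ (hMul' q r)) (hypVol n) := by
    refine AEStronglyMeasurable.mono_ac hac (ContinuousOn.aestronglyMeasurable ?_ hm)
    refine hτlip.continuousOn.comp (Continuous.continuousOn ?_) fun r hr => hmem' r hr
    unfold hMul'
    fun_prop
  have hint2 : Integrable (fun r => τ (hMul' q r) * ψ (hInv' r)) (hypVol n) :=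
    hint.bdd_mul (c := M) hmeas (Filter.Eventually.of_forall fun r => hM _)
  have h1 : τ q = ∫ r, τ q * ψ (hInv' r) ∂(hypVol n) := by
    rw [integral_const_mul, hψnorm, mul_one]
  rw [hconv]
  conv_lhs => rw [h1]
  rw [← integral_sub (hint.const_mul _) hint2, ← Real.norm_eq_abs]
  have h3 : K * (B + 1) * (∫ r, |ψ (hInv' r)| ∂(hypVol n)) * q.2
      = ∫ r, (K * (B + 1) * q.2) * |ψ (hInv' r)| ∂(hypVol n) := by
    rw [integral_const_mul]
    ring
  rw [h3]
  refine norm_integral_le_of_norm_le (hint.abs.const_mul _) ?_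
  filter_upwards [hae] with r hr
  rw [← sub_mul, norm_mul, Real.norm_eq_abs (ψ _)]
  by_cases h0 : ψ (hInv' r) = 0
  · simp [h0]
  refine mul_le_mul_of_nonneg_right ?_ (abs_nonneg _)
  have h4 := hτlip.dist_le_mul q hq0.le (hMul' q r) (hmem' r hr)
  rw [dist_eq_norm, dist_eq_norm] at h4
  refine h4.trans ?_
  rw [mul_assoc]
  refine mul_le_mul_of_nonneg_left ?_ K.2
  have e : q - hMul' q r = q.2 • ((0, 1) - r) := by
    ext <;> simp [hMul', mul_sub]
  rw [e, norm_smul, Real.norm_of_nonneg hq0.le, mul_comm]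
  refine mul_le_mul_of_nonneg_right ?_ hq0.le
  refine (norm_sub_le _ _).trans ?_
  have h5 : ‖((0, 1) : EuclideanSpace ℝ (Fin n) × ℝ)‖ = 1 := by simp [Prod.norm_def]
  rw [h5]
  linarith [hBr r hr h0]
end
end

section
/- Let τ : ℝⁿ × [0,∞) → ℝ be bounded, compactly supported, and Lipschitz continuous with respect to the Euclidean distance, and let ψ : H → ℝ be smooth and compactly supported in H. Then u := τ*ψ is smooth on H and satisfies: there is a constant C₀ with |u(θ,ρ)| ≤ C₀ on H, and for every multi-index α with |α| ≥ 1 there is a constant C_α such that |∂^α u(θ,ρ)| ≤ C_α ρ^{1−|α|} for all (θ,ρ) ∈ H, where ∂^α denotes partial derivatives in the coordinates (θ¹,…,θⁿ,ρ). In particular all first partial derivatives of τ*ψ are uniformly bounded on H. -/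
open MeasureTheory

noncomputable section

/-- The convolution kernel with respect to Lebesgue measure. -/
def hKer {n : ℕ} (ψ : EuclideanSpace ℝ (Fin n) × ℝ → ℝ) (x p : EuclideanSpace ℝ (Fin n) × ℝ) : ℝ :=
  (p.2 ^ (n + 1))⁻¹ * ψ (hMul' (hInv' p) x)

lemma supp_bounds {n : ℕ} {ψ : EuclideanSpace ℝ (Fin n) × ℝ → ℝ}
    (hψsupp : HasCompactSupport ψ) (hψH : tsupport ψ ⊆ Hset n) :
    ∃ b R : ℝ, 0 < b ∧ 0 < R ∧ ∀ z, ψ z ≠ 0 → b ≤ z.2 ∧ z.2 ≤ R ∧ ‖z.1‖ ≤ R := by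
  have hc : IsCompact (tsupport ψ) := hψsupp
  obtain ⟨R, hR⟩ := hc.isBounded.exists_norm_le
  have hb : ∃ b : ℝ, 0 < b ∧ ∀ z ∈ tsupport ψ, b ≤ z.2 := by
    rcases (tsupport ψ).eq_empty_or_nonempty with h | h
    · exact ⟨1, one_pos, by simp [h]⟩
    · obtain ⟨z, hz, hmin⟩ := hc.exists_isMinOn h continuous_snd.continuousOn
      exact ⟨z.2, hψH hz, fun y hy => hmin hy⟩
  obtain ⟨b, hb0, hb⟩ := hb
  refine ⟨b, max R 1, hb0, by positivity, fun z hz => ?_⟩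
  have hz' : z ∈ tsupport ψ := subset_tsupport _ hz
  have h1 := hR z hz'
  have h2 : ‖z.2‖ ≤ R := (norm_snd_le z).trans h1
  have h3 : ‖z.1‖ ≤ R := (norm_fst_le z).trans h1
  exact ⟨hb z hz', ((le_abs_self _).trans h2).trans (le_max_left _ _), h3.trans (le_max_left _ _)⟩

lemma isOpen_Hset (n : ℕ) : IsOpen (Hset n) := isOpen_lt continuous_const continuous_snd

lemma integral_hypVol {n : ℕ} (F : EuclideanSpace ℝ (Fin n) × ℝ → ℝ) :
    ∫ p, F p ∂(hypVol n) = ∫ p, (Hset n).indicator (fun p => (p.2 ^ (n + 1))⁻¹ * F p) p := by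
  unfold hypVol
  rw [integral_withDensity_eq_integral_toReal_smul (by fun_prop) (by simp),
    integral_indicator (isOpen_Hset n).measurableSet]
  refine setIntegral_congr_fun (isOpen_Hset n).measurableSet fun p hp => ?_
  have hp : 0 < p.2 := hp
  simp only [smul_eq_mul]
  rw [ENNReal.toReal_ofReal (by positivity)]

lemma hMul_eq {n : ℕ} (q x : EuclideanSpace ℝ (Fin n) × ℝ) :
    hMul' q x = (q.1, 0) + q.2 • x := by
  simp [hMul', Prod.ext_iff]

lemma haar_vol (n : ℕ) :
    (volume : Measure (EuclideanSpace ℝ (Fin n) × ℝ)).IsAddHaarMeasure :=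
  inferInstanceAs ((volume : Measure (EuclideanSpace ℝ (Fin n))).prod
    (volume : Measure ℝ)).IsAddHaarMeasure

lemma integral_hypVol_comp {n : ℕ} (F : EuclideanSpace ℝ (Fin n) × ℝ → ℝ)
    {q : EuclideanSpace ℝ (Fin n) × ℝ} (hq : q ∈ Hset n) :
    ∫ p, F (hMul' q p) ∂(hypVol n) = ∫ p, F p ∂(hypVol n) := by
  have hq : 0 < q.2 := hq
  rw [integral_hypVol, integral_hypVol]
  set G := (Hset n).indicator (fun p => (p.2 ^ (n + 1))⁻¹ * F p) with hG
  have h1 : ∀ p, (Hset n).indicator (fun p => (p.2 ^ (n + 1))⁻¹ * F (hMul' q p)) p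
      = q.2 ^ (n + 1) * G ((q.1, 0) + q.2 • p) := by
    intro p
    rw [← hMul_eq]
    by_cases hp : p ∈ Hset n
    · have hp' : hMul' q p ∈ Hset n := mul_pos hq hp
      have hp0 : 0 < p.2 := hp
      rw [hG, Set.indicator_of_mem hp, Set.indicator_of_mem hp']
      simp only [hMul', mul_pow]
      field_simp
    · have hp' : hMul' q p ∉ Hset n := fun h => hp ((mul_pos_iff_of_pos_left hq).1 h)
      rw [hG, Set.indicator_of_notMem hp, Set.indicator_of_notMem hp', mul_zero]
  have := haar_vol n
  simp_rw [h1]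
  rw [integral_const_mul,
    Measure.integral_comp_smul volume (fun p => G ((q.1, 0) + p)) q.2,
    integral_add_left_eq_self G]
  have : Module.finrank ℝ (EuclideanSpace ℝ (Fin n) × ℝ) = n + 1 := by simp
  rw [this, abs_of_nonneg (by positivity), smul_eq_mul]
  field_simp

lemma hMul_inv_comp {n : ℕ} {q p x : EuclideanSpace ℝ (Fin n) × ℝ} (hq : q ∈ Hset n) :
    hMul' (hInv' (hMul' q p)) (hMul' q x) = hMul' (hInv' p) x := by
  have hq : q.2 ≠ 0 := ne_of_gt hq
  simp only [hMul', hInv', Prod.mk.injEq]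
  constructor
  · rw [smul_add, smul_add, mul_inv, smul_smul, smul_smul]
    have : q.2⁻¹ * p.2⁻¹ * q.2 = p.2⁻¹ := by field_simp
    rw [this]
    abel
  · field_simp

lemma hConv_mul {n : ℕ} (σ ψ : EuclideanSpace ℝ (Fin n) × ℝ → ℝ)
    {q : EuclideanSpace ℝ (Fin n) × ℝ} (x : EuclideanSpace ℝ (Fin n) × ℝ) (hq : q ∈ Hset n) :
    hConv σ ψ (hMul' q x) = hConv (fun p => σ (hMul' q p)) ψ x := by
  unfold hConv
  rw [← integral_hypVol_comp _ hq]
  simp_rw [hMul_inv_comp hq]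

lemma hConv_congr {n : ℕ} {σ σ' ψ : EuclideanSpace ℝ (Fin n) × ℝ → ℝ}
    (h : ∀ p ∈ Hset n, σ p = σ' p) : hConv σ ψ = hConv σ' ψ := by
  funext x
  unfold hConv
  rw [integral_hypVol, integral_hypVol]
  congr 1
  funext p
  by_cases hp : p ∈ Hset n
  · simp [hp, h p hp]
  · simp [hp]

lemma hConv_eq_ker {n : ℕ} (σ : EuclideanSpace ℝ (Fin n) × ℝ → ℝ)
    {ψ : EuclideanSpace ℝ (Fin n) × ℝ → ℝ} (hψH : tsupport ψ ⊆ Hset n)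
    {x : EuclideanSpace ℝ (Fin n) × ℝ} (hx : x ∈ Hset n) :
    hConv σ ψ x = ∫ p, hKer ψ x p * σ p := by
  unfold hConv
  rw [integral_hypVol]
  congr 1
  funext p
  by_cases hp : p ∈ Hset n
  · rw [Set.indicator_of_mem hp, hKer]; ring
  · rw [Set.indicator_of_notMem hp, hKer]
    have : ψ (hMul' (hInv' p) x) = 0 := by
      by_contra h
      have h1 : 0 < p.2⁻¹ * x.2 := hψH (subset_tsupport _ h)
      have hx : 0 < x.2 := hx
      exact hp (inv_pos.1 ((mul_pos_iff_of_pos_right hx).1 h1))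
    simp [this]

/-- The neighbourhood of the identity. -/
def nbB (n : ℕ) : Set (EuclideanSpace ℝ (Fin n) × ℝ) := Metric.ball (0, 1) (1/2)

lemma nbB_bounds {n : ℕ} {x : EuclideanSpace ℝ (Fin n) × ℝ} (hx : x ∈ nbB n) :
    ‖x.1‖ ≤ 1 ∧ 1/2 < x.2 ∧ x.2 < 3/2 := by
  have hx : dist x (0, 1) < 1/2 := hx
  rw [Prod.dist_eq, max_lt_iff, dist_zero_right, Real.dist_eq, abs_lt] at hx
  obtain ⟨h1, h2, h3⟩ := hx
  exact ⟨by linarith, by linarith, by linarith⟩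

lemma hKer_supp {n : ℕ} {ψ : EuclideanSpace ℝ (Fin n) × ℝ → ℝ}
    (hψsupp : HasCompactSupport ψ) (hψH : tsupport ψ ⊆ Hset n) :
    ∃ c R : ℝ, 0 < c ∧ ∀ x ∈ nbB n, ∀ p, hKer ψ x p ≠ 0 → c ≤ p.2 ∧ ‖p‖ ≤ R := by
  obtain ⟨b, R, hb, hR, h⟩ := supp_bounds hψsupp hψH
  refine ⟨1 / (2 * R), max (1 + R * (3 / (2 * b))) (3 / (2 * b)), by positivity, fun x hx p hp => ?_⟩
  obtain ⟨hx1, hx2, hx3⟩ := nbB_bounds hx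
  have hp' : ψ (hMul' (hInv' p) x) ≠ 0 := fun h0 => hp (by simp [hKer, h0])
  obtain ⟨h1, h2, h3⟩ := h _ hp'
  simp only [hMul', hInv'] at h1 h2 h3
  have hp0 : 0 < p.2 := by
    have : 0 < p.2⁻¹ * x.2 := by linarith
    exact inv_pos.1 ((mul_pos_iff_of_pos_right (by linarith)).1 this)
  rw [inv_mul_eq_div, le_div_iff₀ hp0] at h1
  rw [inv_mul_eq_div, div_le_iff₀ hp0] at h2
  have hup : p.2 ≤ 3 / (2 * b) := by
    rw [le_div_iff₀ (by positivity)]; linarith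
  refine ⟨?_, ?_⟩
  · rw [div_le_iff₀ (by positivity)]; linarith
  · rw [Prod.norm_def]
    refine max_le_max ?_ ?_
    · rw [← smul_neg, ← smul_add, norm_smul, norm_inv, Real.norm_of_nonneg hp0.le,
        inv_mul_le_iff₀ hp0] at h3
      have : ‖p.1‖ ≤ ‖x.1‖ + ‖-p.1 + x.1‖ := by
        have := norm_sub_le x.1 (-p.1 + x.1)
        simpa using this
      have h5 : p.2 * R ≤ R * (3 / (2 * b)) := by
        rw [mul_comm]; gcongr
      linarith
    · rwa [Real.norm_of_nonneg hp0.le]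

lemma hKer_contDiffOn {n : ℕ} {ψ : EuclideanSpace ℝ (Fin n) × ℝ → ℝ}
    (hψ : ContDiff ℝ (⊤ : ℕ∞) ψ)
    (hψsupp : HasCompactSupport ψ) (hψH : tsupport ψ ⊆ Hset n) :
    ContDiffOn ℝ (⊤ : ℕ∞) (fun z : (EuclideanSpace ℝ (Fin n) × ℝ) × (EuclideanSpace ℝ (Fin n) × ℝ) =>
      hKer ψ z.1 z.2) (nbB n ×ˢ Set.univ) := by
  obtain ⟨c, R, hc, h⟩ := hKer_supp hψsupp hψH
  rintro ⟨x, p⟩ ⟨hx, -⟩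
  apply ContDiffAt.contDiffWithinAt
  rcases lt_or_ge 0 p.2 with hp | hp
  · unfold hKer hMul' hInv'
    have hne : p.2 ≠ 0 := hp.ne'
    have hi : ContDiffAt ℝ (⊤ : ℕ∞) (fun z : (EuclideanSpace ℝ (Fin n) × ℝ) ×
        (EuclideanSpace ℝ (Fin n) × ℝ) => z.2.2⁻¹) (x, p) :=
      ContDiffAt.inv (by fun_prop) hne
    refine ContDiffAt.mul ?_ ?_
    · exact ContDiffAt.inv (by fun_prop) (pow_ne_zero _ hne)
    · refine hψ.contDiffAt.comp _ ?_
      refine ContDiffAt.prodMk ?_ ?_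
      · refine ContDiffAt.add ?_ ?_
        · exact (hi.smul (by fun_prop)).neg
        · exact hi.smul (by fun_prop)
      · exact hi.mul (by fun_prop)
  · have : (fun z : (EuclideanSpace ℝ (Fin n) × ℝ) × (EuclideanSpace ℝ (Fin n) × ℝ) =>
      hKer ψ z.1 z.2) =ᶠ[nhds (x, p)] fun _ => 0 := by
      have h1 : {z : (EuclideanSpace ℝ (Fin n) × ℝ) × (EuclideanSpace ℝ (Fin n) × ℝ) |
          z.2.2 < c} ∈ nhds (x, p) :=
        (isOpen_lt (by fun_prop) continuous_const).mem_nhds (by simpa using lt_of_le_of_lt hp hc)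
      have h2 : nbB n ×ˢ Set.univ ∈ nhds (x, p) :=
        (Metric.isOpen_ball.prod isOpen_univ).mem_nhds ⟨hx, trivial⟩
      filter_upwards [h1, h2] with z hz1 hz2
      by_contra h0
      exact absurd (h z.1 hz2.1 z.2 h0).1 (not_le.2 hz1)
    exact contDiffAt_const.congr_of_eventuallyEq this

lemma hKer_integral_contDiffOn {n : ℕ} {ψ : EuclideanSpace ℝ (Fin n) × ℝ → ℝ}
    (hψ : ContDiff ℝ (⊤ : ℕ∞) ψ)
    (hψsupp : HasCompactSupport ψ) (hψH : tsupport ψ ⊆ Hset n)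
    {F : Type*} [NormedAddCommGroup F] [NormedSpace ℝ F] 
    {f : EuclideanSpace ℝ (Fin n) × ℝ → F} (hf : Continuous f) :
    ContDiffOn ℝ (⊤ : ℕ∞) (fun x => ∫ p, hKer ψ x p • f p) (nbB n) := by
  obtain ⟨c, R, hc, h⟩ := hKer_supp hψsupp hψH
  have key := contDiffOn_convolution_right_with_param_comp (𝕜 := ℝ) (n := (⊤ : ℕ∞))
    (μ := (volume : Measure (EuclideanSpace ℝ (Fin n) × ℝ)))
    ((ContinuousLinearMap.lsmul ℝ ℝ : ℝ →L[ℝ] F →L[ℝ] F).flip)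
    (s := nbB n) (v := fun _ => (0 : EuclideanSpace ℝ (Fin n) × ℝ)) contDiffOn_const
    (f := f) (g := fun x y => hKer ψ x (-y)) (k := Metric.closedBall 0 R) Metric.isOpen_ball
    (isCompact_closedBall _ _) ?_ hf.locallyIntegrable ?_
  · refine key.congr fun x hx => ?_
    simp [convolution]
  · intro x y hx hy
    by_contra h0
    have := (h x hx _ h0).2
    rw [norm_neg] at this
    exact hy (by simpa using this)
  · refine (hKer_contDiffOn hψ hψsupp hψH).comp
      (f := fun z : (EuclideanSpace ℝ (Fin n) × ℝ) × (EuclideanSpace ℝ (Fin n) × ℝ) => (z.1, -z.2))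
      (by fun_prop) ?_
    rintro z ⟨hz, -⟩
    exact ⟨hz, trivial⟩

lemma hKer_integrable {n : ℕ} {ψ : EuclideanSpace ℝ (Fin n) × ℝ → ℝ}
    (hψ : ContDiff ℝ (⊤ : ℕ∞) ψ)
    (hψsupp : HasCompactSupport ψ) (hψH : tsupport ψ ⊆ Hset n)
    {F : Type*} [NormedAddCommGroup F] [NormedSpace ℝ F]
    {f : EuclideanSpace ℝ (Fin n) × ℝ → F} (hf : Continuous f)
    {x : EuclideanSpace ℝ (Fin n) × ℝ} (hx : x ∈ nbB n) :
    Integrable (fun p => hKer ψ x p • f p) := by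
  obtain ⟨c, R, hc, h⟩ := hKer_supp hψsupp hψH
  apply Continuous.integrable_of_hasCompactSupport
  · refine Continuous.smul ?_ hf
    have := (hKer_contDiffOn hψ hψsupp hψH).continuousOn.comp
      (f := fun p : EuclideanSpace ℝ (Fin n) × ℝ => (x, p)) (s := Set.univ) (by fun_prop)
      (fun p _ => ⟨hx, trivial⟩)
    exact continuousOn_univ.1 this
  · refine HasCompactSupport.intro (isCompact_closedBall 0 R) fun p hp => ?_
    by_contra h0
    have h1 : hKer ψ x p ≠ 0 := fun h1 => h0 (by simp [h1])
    exact hp (by simpa using (h x hx p h1).2)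

lemma one_mem_nbB (n : ℕ) : ((0, 1) : EuclideanSpace ℝ (Fin n) × ℝ) ∈ nbB n :=
  Metric.mem_ball_self (by norm_num)

lemma nbB_subset (n : ℕ) : nbB n ⊆ Hset n := fun x hx => by
  have := (nbB_bounds hx).2.1
  show 0 < x.2
  linarith

lemma hMul_one {n : ℕ} (q : EuclideanSpace ℝ (Fin n) × ℝ) : hMul' q (0, 1) = q := by
  simp [hMul']

lemma dist_hMul {n : ℕ} {q : EuclideanSpace ℝ (Fin n) × ℝ} (hq : q ∈ Hset n)
    (x y : EuclideanSpace ℝ (Fin n) × ℝ) : dist (hMul' q x) (hMul' q y) = q.2 * dist x y := by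
  have hq : 0 < q.2 := hq
  rw [hMul_eq, hMul_eq, dist_add_left, dist_smul₀, Real.norm_of_nonneg hq.le]

open BoundedContinuousFunction in
/-- All rescaled difference quotients of `σ`, bundled into one map. -/
def quo {n : ℕ} {σ : EuclideanSpace ℝ (Fin n) × ℝ → ℝ} {K : NNReal} (hσ : LipschitzWith K σ)
    (p : EuclideanSpace ℝ (Fin n) × ℝ) : Hset n →ᵇ ℝ :=
  BoundedContinuousFunction.ofNormedAddCommGroup
    (fun q : Hset n => (q : EuclideanSpace ℝ (Fin n) × ℝ).2⁻¹ * (σ (hMul' q p) - σ q))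
    (by
      have h1 : Continuous σ := hσ.continuous
      unfold hMul'
      refine Continuous.mul (Continuous.inv₀ (by fun_prop) fun q => ne_of_gt q.2) ?_
      fun_prop)
    (K * dist p (0, 1))
    (by
      intro q
      have hq : 0 < (q : EuclideanSpace ℝ (Fin n) × ℝ).2 := q.2
      rw [norm_mul, norm_inv, Real.norm_of_nonneg hq.le, inv_mul_le_iff₀ hq, Real.norm_eq_abs, ← Real.dist_eq]
      have := hσ.dist_le_mul (hMul' q p) (hMul' q (0, 1))
      rw [dist_hMul q.2, hMul_one] at this
      linarith)

lemma quo_apply {n : ℕ} {σ : EuclideanSpace ℝ (Fin n) × ℝ → ℝ} {K : NNReal}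
    (hσ : LipschitzWith K σ) (p : EuclideanSpace ℝ (Fin n) × ℝ) (q : Hset n) :
    quo hσ p q = (q : EuclideanSpace ℝ (Fin n) × ℝ).2⁻¹ * (σ (hMul' q p) - σ q) := rfl

lemma quo_lip {n : ℕ} {σ : EuclideanSpace ℝ (Fin n) × ℝ → ℝ} {K : NNReal}
    (hσ : LipschitzWith K σ) : LipschitzWith K (quo hσ) := by
  refine LipschitzWith.of_dist_le_mul fun x y => ?_
  refine (BoundedContinuousFunction.dist_le (by positivity)).2 fun q => ?_
  have hq : 0 < (q : EuclideanSpace ℝ (Fin n) × ℝ).2 := q.2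
  rw [quo_apply, quo_apply, Real.dist_eq, ← mul_sub, abs_mul, abs_inv, abs_of_pos hq,
    inv_mul_le_iff₀ hq, sub_sub_sub_cancel_right, ← Real.dist_eq]
  have := hσ.dist_le_mul (hMul' q x) (hMul' q y)
  rw [dist_hMul q.2] at this
  linarith

/-- Key formula. -/
lemma key_formula {n : ℕ} {ψ : EuclideanSpace ℝ (Fin n) × ℝ → ℝ}
    (hψ : ContDiff ℝ (⊤ : ℕ∞) ψ)
    (hψsupp : HasCompactSupport ψ) (hψH : tsupport ψ ⊆ Hset n)
    {σ : EuclideanSpace ℝ (Fin n) × ℝ → ℝ} {K : NNReal} (hσ : LipschitzWith K σ)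
    (q : Hset n) {x : EuclideanSpace ℝ (Fin n) × ℝ} (hx : x ∈ nbB n) :
    hConv σ ψ (hMul' q x) = σ q * hConv (fun _ => 1) ψ (0, 1) +
      (q : EuclideanSpace ℝ (Fin n) × ℝ).2 * (∫ p, hKer ψ x p • quo hσ p) q := by
  have hq : 0 < (q : EuclideanSpace ℝ (Fin n) × ℝ).2 := q.2
  have hxH := nbB_subset n hx
  have h1 : hConv (fun _ => 1) ψ (0, 1) = hConv (fun _ => 1) ψ x := by
    conv_rhs => rw [← hMul_one x, hConv_mul _ _ _ hxH]
  rw [h1, hConv_mul _ _ _ q.2, hConv_eq_ker _ hψH hxH, hConv_eq_ker _ hψH hxH]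
  have hI := hKer_integrable hψ hψsupp hψH (quo_lip hσ).continuous hx
  have h2 := (BoundedContinuousFunction.evalCLM ℝ q).integral_comp_comm hI
  have h3 : (∫ p, hKer ψ x p • quo hσ p) q = ∫ p, hKer ψ x p * quo hσ p q := by
    rw [show (∫ p, hKer ψ x p • quo hσ p) q =
      (BoundedContinuousFunction.evalCLM ℝ q) (∫ p, hKer ψ x p • quo hσ p) from rfl, ← h2]
    rfl
  have hI1 : Integrable (fun p => hKer ψ x p * (1:ℝ)) :=
    hKer_integrable hψ hψsupp hψH (f := fun _ => (1:ℝ)) continuous_const hx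
  have hI2 : Integrable (fun p => hKer ψ x p * quo hσ p q) :=
    (BoundedContinuousFunction.evalCLM ℝ q).integrable_comp hI
  rw [h3, ← integral_const_mul, ← integral_const_mul, ← integral_add (hI1.const_mul _)
    (hI2.const_mul _)]
  congr 1
  funext p
  rw [quo_apply]
  field_simp
  ring

lemma scale_iter {n m : ℕ} {F : Type*} [NormedAddCommGroup F] [NormedSpace ℝ F]
    (W : EuclideanSpace ℝ (Fin n) × ℝ → F) {r : ℝ} (hr : 0 < r)
    (a y : EuclideanSpace ℝ (Fin n) × ℝ) :
    ‖iteratedFDeriv ℝ m (fun y => W (r⁻¹ • (y - a))) y‖ ≤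
      ‖iteratedFDeriv ℝ m W (r⁻¹ • (y - a))‖ * r⁻¹ ^ m := by
  have hr' : r⁻¹ ≠ 0 := by positivity
  let g : (EuclideanSpace ℝ (Fin n) × ℝ) ≃L[ℝ] (EuclideanSpace ℝ (Fin n) × ℝ) :=
    ContinuousLinearEquiv.smulLeft (Units.mk0 r⁻¹ hr')
  have hg : ∀ z, g z = r⁻¹ • z := fun z => rfl
  have h1 : iteratedFDeriv ℝ m (fun y => W (r⁻¹ • (y - a))) y =
      iteratedFDeriv ℝ m (W ∘ g) (y - a) := by
    rw [← iteratedFDeriv_comp_sub]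
    rfl
  have h2 := g.iteratedFDerivWithin_comp_right W uniqueDiffOn_univ (Set.mem_univ (g (y - a))) m
  rw [Set.preimage_univ, iteratedFDerivWithin_univ, iteratedFDerivWithin_univ] at h2
  rw [h1, h2]
  refine (ContinuousMultilinearMap.norm_compContinuousLinearMap_le _ _).trans ?_
  rw [Finset.prod_const, Finset.card_univ, Fintype.card_fin, hg]
  gcongr
  refine ContinuousLinearMap.opNorm_le_bound _ (by positivity) fun z => ?_
  show ‖r⁻¹ • z‖ ≤ _
  rw [norm_smul, Real.norm_of_nonneg (by positivity)]

lemma main_lip {n : ℕ} {ψ : EuclideanSpace ℝ (Fin n) × ℝ → ℝ}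
    (hψ : ContDiff ℝ (⊤ : ℕ∞) ψ)
    (hψsupp : HasCompactSupport ψ) (hψH : tsupport ψ ⊆ Hset n)
    {σ : EuclideanSpace ℝ (Fin n) × ℝ → ℝ} {K : NNReal} (hσ : LipschitzWith K σ)
    (hbdd : ∃ M : ℝ, ∀ p, |σ p| ≤ M) :
    ContDiffOn ℝ (⊤ : ℕ∞) (hConv σ ψ) (Hset n) ∧
    (∃ C₀ : ℝ, ∀ p ∈ Hset n, |hConv σ ψ p| ≤ C₀) ∧
    (∀ m : ℕ, 1 ≤ m → ∃ C : ℝ, ∀ p ∈ Hset n,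
      ‖iteratedFDerivWithin ℝ m (hConv σ ψ) (Hset n) p‖ ≤ C * p.2 ^ ((1 : ℤ) - m)) := by
  set W := fun x => ∫ p, hKer ψ x p • quo hσ p with hW
  have hWs : ContDiffOn ℝ (⊤ : ℕ∞) W (nbB n) :=
    hKer_integral_contDiffOn hψ hψsupp hψH (quo_lip hσ).continuous
  have hWat : ContDiffAt ℝ (⊤ : ℕ∞) W (0, 1) :=
    hWs.contDiffAt (Metric.isOpen_ball.mem_nhds (one_mem_nbB n))
  set c := hConv (fun _ => 1) ψ (0, 1) with hc
  -- local representation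
  have hrep : ∀ q : Hset n, hConv σ ψ =ᶠ[nhds (q : EuclideanSpace ℝ (Fin n) × ℝ)]
      fun y => σ q * c + (q : EuclideanSpace ℝ (Fin n) × ℝ).2 •
        (BoundedContinuousFunction.evalCLM ℝ q)
          (W ((q : EuclideanSpace ℝ (Fin n) × ℝ).2⁻¹ • (y - (q.1.1, 0)))) := by
    intro q
    have hq : 0 < (q : EuclideanSpace ℝ (Fin n) × ℝ).2 := q.2
    have h1 : (fun y : EuclideanSpace ℝ (Fin n) × ℝ => q.1.2⁻¹ • (y - (q.1.1, 0))) ⁻¹' nbB n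
        ∈ nhds (q : EuclideanSpace ℝ (Fin n) × ℝ) := by
      refine (Metric.isOpen_ball.preimage (by fun_prop)).mem_nhds ?_
      have : q.1.2⁻¹ • (q.1 - (q.1.1, 0)) = ((0, 1) : EuclideanSpace ℝ (Fin n) × ℝ) := by
        simp [Prod.ext_iff, hq.ne']
      show q.1.2⁻¹ • (q.1 - (q.1.1, 0)) ∈ nbB n
      rw [this]
      exact one_mem_nbB n
    filter_upwards [h1] with y hy
    have h2 := key_formula hψ hψsupp hψH hσ q hy
    rw [hMul_eq, smul_inv_smul₀ hq.ne', add_sub_cancel] at h2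
    exact h2
  have hpt : ∀ q : Hset n, q.1.2⁻¹ • (q.1 - (q.1.1, 0)) =
      ((0, 1) : EuclideanSpace ℝ (Fin n) × ℝ) := by
    intro q
    have hq : q.1.2 ≠ 0 := ne_of_gt q.2
    simp [Prod.ext_iff, hq]
  refine ⟨?_, ?_, ?_⟩
  · intro q hq
    apply ContDiffAt.contDiffWithinAt
    refine ContDiffAt.congr_of_eventuallyEq ?_ (hrep ⟨q, hq⟩)
    refine contDiffAt_const.add (ContDiffAt.const_smul q.2 ?_)
    refine (ContinuousLinearMap.contDiff _).contDiffAt.comp _ ?_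
    refine ContDiffAt.comp (g := W) (f := fun y : EuclideanSpace ℝ (Fin n) × ℝ =>
        q.2⁻¹ • (y - (q.1, 0))) _ ?_ (by fun_prop)
    rw [hpt ⟨q, hq⟩]
    exact hWat
  · obtain ⟨M, hM⟩ := hbdd
    refine ⟨∫ p, ‖hKer ψ (0, 1) p • (1:ℝ)‖ * M, fun q hq => ?_⟩
    rw [← hMul_one q, hConv_mul _ _ _ hq, hConv_eq_ker _ hψH (nbB_subset n (one_mem_nbB n)),
      ← Real.norm_eq_abs]
    refine norm_integral_le_of_norm_le ?_ (Filter.Eventually.of_forall fun p => ?_)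
    · exact ((hKer_integrable hψ hψsupp hψH (f := fun _ => (1:ℝ)) continuous_const
        (one_mem_nbB n)).norm).mul_const M
    · rw [norm_mul, smul_eq_mul, mul_one]
      gcongr
      exact hM _
  · intro m hm
    refine ⟨‖iteratedFDeriv ℝ m W (0, 1)‖, fun q hq => ?_⟩
    have hq0 : 0 < q.2 := hq
    rw [iteratedFDerivWithin_of_isOpen m (isOpen_Hset n) hq,
      ((hrep ⟨q, hq⟩).iteratedFDeriv ℝ m).eq_of_nhds]
    set V : EuclideanSpace ℝ (Fin n) × ℝ → BoundedContinuousFunction (Hset n) ℝ :=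
      fun y => W (q.2⁻¹ • (y - (q.1, 0))) with hV
    have hVat : ContDiffAt ℝ (⊤ : ℕ∞) V q := by
      refine ContDiffAt.comp (g := W) (f := fun y : EuclideanSpace ℝ (Fin n) × ℝ =>
        q.2⁻¹ • (y - (q.1, 0))) _ ?_ (by fun_prop)
      rw [hpt ⟨q, hq⟩]
      exact hWat
    set L : BoundedContinuousFunction (Hset n) ℝ →L[ℝ] ℝ :=
      q.2 • (BoundedContinuousFunction.evalCLM ℝ (⟨q, hq⟩ : Hset n)) with hL
    have hLn : ‖L‖ ≤ q.2 := by
      refine ContinuousLinearMap.opNorm_le_bound _ hq0.le fun f => ?_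
      show ‖q.2 • f ⟨q, hq⟩‖ ≤ _
      rw [norm_smul, Real.norm_of_nonneg hq0.le]
      gcongr
      exact f.norm_coe_le_norm _
    have hm' : ((m : ℕ∞) : WithTop ℕ∞) ≤ ((⊤ : ℕ∞) : WithTop ℕ∞) := by exact_mod_cast le_top
    have hfun : iteratedFDeriv ℝ m ((fun _ => σ q * c) + L ∘ V) q =
        iteratedFDeriv ℝ m (L ∘ V) q := by
      rw [iteratedFDeriv_add_apply contDiffAt_const
        ((L.contDiff.contDiffAt.comp q hVat).of_le hm'),
        iteratedFDeriv_const_of_ne (by omega)]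
      simp
    have h1 := L.norm_iteratedFDeriv_comp_left hVat hm'
    have h2 := scale_iter (m := m) W hq0 (q.1, 0) q
    rw [hpt ⟨q, hq⟩] at h2
    show ‖iteratedFDeriv ℝ m ((fun _ => σ q * c) + L ∘ V) q‖ ≤ _
    rw [hfun]
    calc _ ≤ ‖L‖ * ‖iteratedFDeriv ℝ m V q‖ := h1
      _ ≤ q.2 * (‖iteratedFDeriv ℝ m W (0, 1)‖ * q.2⁻¹ ^ m) := by gcongr
      _ = _ := by
        rw [zpow_sub₀ hq0.ne', zpow_one, zpow_natCast, inv_pow]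
        ring

/-- If `τ` is bounded, compactly supported, and Lipschitz on `ℝⁿ × [0,∞)`, and `ψ` is smooth
and compactly supported in `H`, then `u := τ*ψ` is smooth on `H`, uniformly bounded on `H`,
and every derivative of order `m ≥ 1` satisfies `‖D^m u(θ,ρ)‖ ≤ C_m ρ^{1−m}` on `H`; in
particular all first partial derivatives of `τ*ψ` are uniformly bounded on `H`. -/
theorem stmt9 (n : ℕ) (hn : 1 ≤ n)
    (τ : EuclideanSpace ℝ (Fin n) × ℝ → ℝ)
    (K : NNReal) (hτlip : LipschitzOnWith K τ {p | 0 ≤ p.2})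
    (hτbdd : ∃ M : ℝ, ∀ p, |τ p| ≤ M) (hτsupp : HasCompactSupport τ)
    (ψ : EuclideanSpace ℝ (Fin n) × ℝ → ℝ)
    (hψ : ContDiff ℝ (⊤ : ℕ∞) ψ) (hψsupp : HasCompactSupport ψ) (hψH : tsupport ψ ⊆ Hset n) :
    ContDiffOn ℝ (⊤ : ℕ∞) (hConv τ ψ) (Hset n) ∧
    (∃ C₀ : ℝ, ∀ p ∈ Hset n, |hConv τ ψ p| ≤ C₀) ∧
    (∀ m : ℕ, 1 ≤ m → ∃ C : ℝ, ∀ p ∈ Hset n,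
      ‖iteratedFDerivWithin ℝ m (hConv τ ψ) (Hset n) p‖ ≤ C * p.2 ^ ((1 : ℤ) - m)) := by
  have hmax : ∀ x y : EuclideanSpace ℝ (Fin n) × ℝ,
      dist (x.1, max x.2 0) (y.1, max y.2 0) ≤ dist x y := by
    intro x y
    rw [Prod.dist_eq, Prod.dist_eq]
    refine max_le_max le_rfl ?_
    rw [Real.dist_eq, Real.dist_eq]
    exact abs_max_sub_max_le_abs _ _ _
  have hσ : LipschitzWith K (fun p : EuclideanSpace ℝ (Fin n) × ℝ => τ (p.1, max p.2 0)) := by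
    refine LipschitzWith.of_dist_le_mul fun x y => ?_
    refine (hτlip.dist_le_mul (x.1, max x.2 0) (le_max_right x.2 0 : (0:ℝ) ≤ max x.2 0)
      (y.1, max y.2 0) (le_max_right y.2 0 : (0:ℝ) ≤ max y.2 0)).trans ?_
    gcongr
    exact hmax x y
  have heq : hConv τ ψ = hConv (fun p => τ (p.1, max p.2 0)) ψ := by
    refine hConv_congr fun p hp => ?_
    have hp : 0 < p.2 := hp
    simp only [max_eq_left hp.le]
  rw [heq]
  obtain ⟨M, hM⟩ := hτbdd
  exact main_lip hψ hψsupp hψH hσ ⟨M, fun p => hM _⟩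
end
end

section
/- Let n ≥ 1 and A, B ≥ 0. Let u : ℝⁿ × [0,1] → ℝ be C¹ with u(θ,0) = 0 for all θ ∈ ℝⁿ, and let w̃ : ℝⁿ × [0,1] → ℝ be differentiable with ‖Dw̃(z)‖ ≤ B for all z. Assume that |∂_ρ u(θ,t) − w̃(θ,t)| ≤ At for all (θ,t) ∈ ℝⁿ × [0,1], where ∂_ρ denotes the partial derivative in the last coordinate. Then for all (θ,ρ) ∈ ℝⁿ × [0,1]: |u(θ,ρ) − ρ w̃(θ,ρ)| ≤ ((A+B)/2) ρ², and |∂_ρ(u − ρw̃)(θ,ρ)| = |∂_ρ u(θ,ρ) − w̃(θ,ρ) − ρ ∂_ρ w̃(θ,ρ)| ≤ (A+B) ρ. -/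
noncomputable section

/-- Let `u : ℝⁿ × [0,1] → ℝ` be `C¹` (with derivative `Du`, continuous on
`S = ℝⁿ × [0,1]`) with `u(θ,0) = 0`, and let `w̃` be differentiable with total derivative `Dw`
bounded by `B`. If the normal derivative `∂_ρ u(θ,t) = Du(θ,t)(0,1)` satisfies
`|∂_ρ u(θ,t) − w̃(θ,t)| ≤ At` on `S`, then on `S`:
`|u(θ,ρ) − ρ w̃(θ,ρ)| ≤ ((A+B)/2) ρ²` and
`|∂_ρ u(θ,ρ) − w̃(θ,ρ) − ρ ∂_ρ w̃(θ,ρ)| ≤ (A+B) ρ`. -/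
theorem stmt11 (n : ℕ) (hn : 1 ≤ n) (A B : ℝ) (hA : 0 ≤ A) (hB : 0 ≤ B)
    (u wt : EuclideanSpace ℝ (Fin n) × ℝ → ℝ)
    (Du Dw : EuclideanSpace ℝ (Fin n) × ℝ → (EuclideanSpace ℝ (Fin n) × ℝ) →L[ℝ] ℝ)
    (S : Set (EuclideanSpace ℝ (Fin n) × ℝ))
    (hS : S = {z | z.2 ∈ Set.Icc (0 : ℝ) 1})
    (hu : ∀ z ∈ S, HasFDerivWithinAt u (Du z) S z)
    (hDu_cont : ContinuousOn Du S)
    (hu0 : ∀ θ, u (θ, 0) = 0)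
    (hw : ∀ z ∈ S, HasFDerivWithinAt wt (Dw z) S z)
    (hDw_bdd : ∀ z ∈ S, ‖Dw z‖ ≤ B)
    (hnd : ∀ z ∈ S, |Du z (0, 1) - wt z| ≤ A * z.2) :
    ∀ z ∈ S,
      |u z - z.2 * wt z| ≤ ((A + B) / 2) * z.2 ^ 2 ∧
      |Du z (0, 1) - wt z - z.2 * Dw z (0, 1)| ≤ (A + B) * z.2 := by
  subst hS
  have key : ∀ z : EuclideanSpace ℝ (Fin n) × ℝ, z.2 ∈ Set.Icc (0 : ℝ) 1 →
      |Du z (0, 1) - wt z - z.2 * Dw z (0, 1)| ≤ (A + B) * z.2 := by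
    intro z hz
    have h1 := hnd z hz
    have h2 : |Dw z (0, 1)| ≤ B := by
      have h3 := (Dw z).le_opNorm (0, 1)
      have h4 : ‖((0, 1) : EuclideanSpace ℝ (Fin n) × ℝ)‖ = 1 := by simp [Prod.norm_def]
      rw [h4, mul_one, Real.norm_eq_abs] at h3
      exact h3.trans (hDw_bdd z hz)
    have h5 : |z.2 * Dw z (0, 1)| ≤ z.2 * B := by
      rw [abs_mul, abs_of_nonneg hz.1]
      exact mul_le_mul_of_nonneg_left h2 hz.1
    have h6 := abs_sub (Du z (0, 1) - wt z) (z.2 * Dw z (0, 1))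
    linarith
  intro z hz
  refine ⟨?_, key z hz⟩
  obtain ⟨θ, ρ⟩ := z
  have hline : ∀ t : ℝ, HasDerivWithinAt (fun t : ℝ => ((θ, t) : EuclideanSpace ℝ (Fin n) × ℝ))
      (0, 1) (Set.Icc 0 1) t := fun t =>
    ((hasDerivAt_const t θ).prodMk (hasDerivAt_id t)).hasDerivWithinAt
  have hd : ∀ t ∈ Set.Icc (0 : ℝ) 1, HasDerivWithinAt (fun t : ℝ => u (θ, t) - t * wt (θ, t))
      (Du (θ, t) (0, 1) - wt (θ, t) - t * Dw (θ, t) (0, 1)) (Set.Icc 0 1) t := by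
    intro t ht
    have hmaps : Set.MapsTo (fun t : ℝ => ((θ, t) : EuclideanSpace ℝ (Fin n) × ℝ))
        (Set.Icc 0 1) {z | z.2 ∈ Set.Icc (0 : ℝ) 1} := fun s hs => hs
    have a1 := (hu (θ, t) ht).comp_hasDerivWithinAt t (hline t) hmaps
    have a2 := (hw (θ, t) ht).comp_hasDerivWithinAt t (hline t) hmaps
    have a3 := a1.sub ((hasDerivWithinAt_id t (Set.Icc 0 1)).mul a2)
    refine (a3.congr_deriv ?_)
    simp
    ring
  have hB' : ∀ t : ℝ, HasDerivAt (fun t : ℝ => ((A + B) / 2) * t ^ 2) ((A + B) * t) t := by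
    intro t
    refine ((hasDerivAt_pow 2 t).const_mul ((A + B) / 2)).congr_deriv ?_
    simp
    ring
  have := image_norm_le_of_norm_deriv_right_le_deriv_boundary
    (f := fun t : ℝ => u (θ, t) - t * wt (θ, t)) (a := 0) (b := 1)
    (fun t ht => (hd t ht).continuousWithinAt)
    (fun t ht => (hd t ⟨ht.1, ht.2.le⟩).mono_of_mem_nhdsWithin
      (Icc_mem_nhdsGE_of_mem ht))
    (by simp [hu0]) hB'
    (fun t ht => key (θ, t) ⟨ht.1, ht.2.le⟩) hz
  simpa using this
end
end
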